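/- Let l be a symmetric loss with Σ_{y=1}^C l(z,y) = K for all z. Under uniform label noise of level ρ, for every random variable Z = f(X) with f measurable such that l(Z,Y) and l(Z,Ȳ) are integrable, it holds that E[l(Z,Ȳ)] = ρK/(C−1) + (1 − ρC/(C−1))·E[l(Z,Y)]. -/

import Mathlib

open MeasureTheory

/-- `Ybar` is a uniformly noisy version of `Y` at noise level `ρ`: for every function
`h : 𝒳 × [C] → ℝ` (with the relevant integrability),
`E[h(X,Ȳ)] = (1−ρ)·E[h(X,Y)] + (ρ/(C−1))·E[Σ_{i≠Y} h(X,i)]`,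
which is the expectation form of `P(Ȳ=i | Y,X) = ρ/(C−1)` for `i ≠ Y` and `1−ρ` for `i = Y`. -/
def UniformLabelNoise {Ω 𝒳 : Type*} [MeasurableSpace Ω] (P : Measure Ω) (C : ℕ) (ρ : ℝ)
    (X : Ω → 𝒳) (Y Ybar : Ω → Fin C) : Prop :=
  ∀ h : 𝒳 → Fin C → ℝ,
    Integrable (fun ω => h (X ω) (Ybar ω)) P →
    Integrable (fun ω => h (X ω) (Y ω)) P →
    (∀ i, Integrable (fun ω => h (X ω) i) P) →
    ∫ ω, h (X ω) (Ybar ω) ∂P =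
      (1 - ρ) * ∫ ω, h (X ω) (Y ω) ∂P
        + (ρ / ((C : ℝ) - 1)) * ∫ ω, (∑ i : Fin C, if i = Y ω then 0 else h (X ω) i) ∂P

lemma sum_ite_eq_zero_eq_sum_sub {ι M : Type*} [DecidableEq ι] [AddCommGroup M] {s : Finset ι}
    {j : ι} (hj : j ∈ s) (g : ι → M) :
    ∑ i ∈ s, (if i = j then 0 else g i) = ∑ i ∈ s, g i - g j := by
  rw [Finset.sum_ite, Finset.sum_const_zero, zero_add, Finset.filter_ne',
    Finset.sum_erase_eq_sub hj]

section UniformLabelNoise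

variable {Ω 𝒳 : Type*} [MeasurableSpace Ω] {P : Measure Ω} {C : ℕ} {ρ : ℝ}
  {X : Ω → 𝒳} {Y Ybar : Ω → Fin C} {h : 𝒳 → Fin C → ℝ}

lemma UniformLabelNoise.integral_eq_sum_add (hnoise : UniformLabelNoise P C ρ X Y Ybar)
    (hC : C ≠ 1)
    (hYbar_int : Integrable (fun ω => h (X ω) (Ybar ω)) P)
    (hY_int : Integrable (fun ω => h (X ω) (Y ω)) P)
    (h_int : ∀ i, Integrable (fun ω => h (X ω) i) P) :
    ∫ ω, h (X ω) (Ybar ω) ∂P =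
      ρ / ((C : ℝ) - 1) * ∫ ω, ∑ i, h (X ω) i ∂P
        + (1 - ρ * C / ((C : ℝ) - 1)) * ∫ ω, h (X ω) (Y ω) ∂P := by
  have hC1 : (C : ℝ) - 1 ≠ 0 := sub_ne_zero.2 (Nat.cast_ne_one.2 hC)
  have h_wrong : ∫ ω, (∑ i, if i = Y ω then 0 else h (X ω) i) ∂P =
      ∫ ω, ∑ i, h (X ω) i ∂P - ∫ ω, h (X ω) (Y ω) ∂P := by
    simp_rw [sum_ite_eq_zero_eq_sum_sub (Finset.mem_univ _)]
    exact integral_sub (integrable_finsetSum _ fun i _ => h_int i) hY_int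
  rw [hnoise h hYbar_int hY_int h_int, h_wrong]
  field_simp
  ring

theorem stmt1_general [IsProbabilityMeasure P] (hnoise : UniformLabelNoise P C ρ X Y Ybar)
    (hC : C ≠ 1) {K : ℝ} (hsym : ∀ᵐ ω ∂P, ∑ y, h (X ω) y = K)
    (hYbar_int : Integrable (fun ω => h (X ω) (Ybar ω)) P)
    (hY_int : Integrable (fun ω => h (X ω) (Y ω)) P)
    (h_int : ∀ i, Integrable (fun ω => h (X ω) i) P) :
    ∫ ω, h (X ω) (Ybar ω) ∂P =
      ρ * K / ((C : ℝ) - 1) + (1 - ρ * C / ((C : ℝ) - 1)) * ∫ ω, h (X ω) (Y ω) ∂P := by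
  have h_total : ∫ ω, ∑ y, h (X ω) y ∂P = K := by
    rw [integral_congr_ae hsym, integral_const, probReal_univ, one_smul]
  rw [hnoise.integral_eq_sum_add hC hYbar_int hY_int h_int, h_total, div_mul_eq_mul_div]

end UniformLabelNoise

/-- For a symmetric loss `l` (with `Σ_y l(z,y) = K` for all `z`), under uniform label
noise of level `ρ`, for every `Z = f(X)` with `f` measurable and the losses integrable,
`E[l(Z,Ȳ)] = ρK/(C−1) + (1 − ρC/(C−1))·E[l(Z,Y)]`. -/
theorem stmt1
    {Ω 𝒳 : Type*} [MeasurableSpace Ω] [MeasurableSpace 𝒳]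
    (P : Measure Ω) [IsProbabilityMeasure P]
    (C : ℕ) (hC : 2 ≤ C) (ρ : ℝ) (hρ0 : 0 ≤ ρ) (hρ : ρ < ((C : ℝ) - 1) / C)
    (X : Ω → 𝒳) (Y Ybar : Ω → Fin C)
    (hX : Measurable X) (hY : Measurable Y) (hYbar : Measurable Ybar)
    (hnoise : UniformLabelNoise P C ρ X Y Ybar)
    (l : (Fin C → ℝ) → Fin C → ℝ) (K : ℝ)
    (hsym : ∀ z, ∑ y : Fin C, l z y = K)
    (f : 𝒳 → Fin C → ℝ) (hf : Measurable f)
    (hint1 : Integrable (fun ω => l (f (X ω)) (Ybar ω)) P)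
    (hint2 : Integrable (fun ω => l (f (X ω)) (Y ω)) P)
    (hint3 : ∀ i, Integrable (fun ω => l (f (X ω)) i) P) :
    ∫ ω, l (f (X ω)) (Ybar ω) ∂P =
      ρ * K / ((C : ℝ) - 1) + (1 - ρ * C / ((C : ℝ) - 1)) * ∫ ω, l (f (X ω)) (Y ω) ∂P :=
  stmt1_general (h := fun x => l (f x)) hnoise (by lia) (.of_forall fun ω => hsym (f (X ω)))
    hint1 hint2 hint3
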